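/- arXiv:2511.22916 — 2 statements merged into one kernel-verified Lean document; each statement's English description precedes it below -/
import Mathlib

section
/- Let X ⊆ ℝⁿ be a nonempty closed set, U ⊆ ℝⁿ a convex set, and c : ℝⁿ → ℝᵖ differentiable with ∇c L_c-Lipschitz on U and ‖∇c(u)‖ ≤ M_c for all u ∈ U (so c is M_c-Lipschitz on U). Let y ∈ X ∩ U, set B := ∇c(y), let Q ∈ ℝ^{n×n} be symmetric positive semidefinite with ‖Q‖ ≤ M_Q, let τ ≥ 0 satisfy τ ≤ L_τ‖c(y)‖, and suppose ⟨v, BᵀQBv⟩ ≥ (σ_Q/2)‖v‖² for all v ∈ ℝᵖ with σ_Q > 0. Assume (2M_c/σ_Q)‖c(y)‖ ≤ 1 and that dist(y + Qv, X) ≤ L_ρ‖v‖² for every ‖v‖ ≤ 1. Set d := B(BᵀQB + τ I_p)⁻¹ c(y) and 𝒜 := y − Qd, and assume 𝒜 ∈ U. Then every w ∈ X with ‖𝒜 − w‖ = dist(𝒜, X) that lies in U satisfies ‖c(w)‖ ≤ ((4 L_ρ M_c³ + 2 L_τ σ_Q + 2 L_c M_Q² M_c²)/σ_Q²)·‖c(y)‖².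 -/
/-!
Write `B = ∇c(y)`, so `J y = Bᵀ`, and let `z` solve `(BᵀQB + τI) z = c(y)`, so that `d = Bz`.
Coercivity of `BᵀQB` makes the system solvable and gives `‖z‖ ≤ (2/σ_Q)‖c(y)‖`, hence
`‖d‖ ≤ (2M_c/σ_Q)‖c(y)‖ ≤ 1`. Since `BᵀQd = c(y) - τz`, the linearization of `c` at `y` along
`𝒜 - y = -Qd` equals `τz`, and the Taylor estimate
`norm_sub_linearization_le` bounds the remainder by `(L_c/2)‖Qd‖²`; this controls `c(𝒜)`.
Moving from `𝒜` to `w` costs at most `M_c · dist(𝒜, X) ≤ M_c L_ρ ‖d‖²`.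

The constants `L_ρ` and `L_c` are not assumed nonnegative. When `c(y) = 0` the step is trivial,
`w = y`, and both sides vanish. When `c(y) ≠ 0`, coercivity forces `d ≠ 0` and `Qd ≠ 0`, which
makes both constants nonnegative.
-/

open Metric
open scoped RealInnerProductSpace

/-- First-order Taylor estimate with the sharp factor `1/2`, for a map whose derivative satisfies
a Lipschitz bound on a convex set. -/
theorem norm_sub_linearization_le {E F : Type*} [NormedAddCommGroup E] [NormedSpace ℝ E]
    [NormedAddCommGroup F] [NormedSpace ℝ F] {U : Set E} (hU : Convex ℝ U) {c : E → F}
    {J : E → E →L[ℝ] F} (hderiv : ∀ u ∈ U, HasFDerivAt c (J u) u) {L : ℝ}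
    (hJ : ∀ u ∈ U, ∀ v ∈ U, ‖J u - J v‖ ≤ L * ‖u - v‖) {y h : E} (hy : y ∈ U)
    (hyh : y + h ∈ U) : ‖c (y + h) - c y - J y h‖ ≤ L / 2 * ‖h‖ ^ 2 := by
  have hmem : ∀ t ∈ Set.Icc (0 : ℝ) 1, y + t • h ∈ U := fun t ht => hU.add_smul_mem hy hyh ht
  have hg : ∀ t ∈ Set.Icc (0 : ℝ) 1,
      HasDerivAt (fun t : ℝ => c (y + t • h) - c y - t • J y h) (J (y + t • h) h - J y h) t := by
    intro t ht
    have h1 : HasDerivAt (fun t : ℝ => y + t • h) h t := by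
      simpa using ((hasDerivAt_id t).smul_const h).const_add y
    have h2 := (hderiv _ (hmem t ht)).comp_hasDerivAt t h1
    have h3 : HasDerivAt (fun t : ℝ => t • J y h) (J y h) t := by
      simpa using (hasDerivAt_id t).smul_const (J y h)
    exact (h2.sub_const (c y)).sub h3
  have hB : ∀ t : ℝ, HasDerivAt (fun t : ℝ => L / 2 * ‖h‖ ^ 2 * t ^ 2) (L * ‖h‖ ^ 2 * t) t := by
    intro t
    refine ((hasDerivAt_pow 2 t).const_mul (L / 2 * ‖h‖ ^ 2)).congr_deriv ?_
    push_cast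
    ring
  have key := image_norm_le_of_norm_deriv_right_le_deriv_boundary
    (f := fun t : ℝ => c (y + t • h) - c y - t • J y h) (a := 0) (b := 1)
    (f' := fun t => J (y + t • h) h - J y h)
    (fun t ht => (hg t ht).continuousAt.continuousWithinAt)
    (fun t ht => (hg t ⟨ht.1, ht.2.le⟩).hasDerivWithinAt)
    (by simp) hB
    (by
      intro t ht
      have h1 := hJ _ (hmem t ⟨ht.1, ht.2.le⟩) y hy
      have h2 := (J (y + t • h) - J y).le_opNorm h
      rw [add_sub_cancel_left, norm_smul, Real.norm_of_nonneg ht.1] at h1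
      calc ‖J (y + t • h) h - J y h‖ ≤ ‖J (y + t • h) - J y‖ * ‖h‖ := h2
        _ ≤ L * (t * ‖h‖) * ‖h‖ := by gcongr
        _ = L * ‖h‖ ^ 2 * t := by ring)
    (Set.right_mem_Icc.2 zero_le_one)
  simpa using key

/-- A continuous endomorphism of a finite-dimensional inner product space whose quadratic
form is bounded below by `σ‖v‖²` is a unit. -/
theorem isUnit_of_coercive {p : ℕ} {σ : ℝ} (hσ : 0 < σ)
    (H : EuclideanSpace ℝ (Fin p) →L[ℝ] EuclideanSpace ℝ (Fin p))
    (hH : ∀ v, σ * ‖v‖ ^ 2 ≤ ⟪v, H v⟫) : IsUnit H := by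
  have hinj : Function.Injective H := by
    rw [injective_iff_map_eq_zero]
    intro v hv
    have h1 := hH v
    rw [hv, inner_zero_right] at h1
    by_contra hne
    have : 0 < ‖v‖ := norm_pos_iff.2 hne
    have : 0 < σ * ‖v‖ ^ 2 := by positivity
    linarith
  rw [ContinuousLinearMap.isUnit_iff_bijective]
  exact ⟨hinj, (LinearMap.injective_iff_surjective (f := H.toLinearMap)).1 hinj⟩

/-- Quadratic decrease of the feasibility violation after projecting
the constraint dissolving step `𝒜 = y - Qd` back onto `X`: every nearest point `w` of
`X` to `𝒜` lying in `U` satisfies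
`‖c(w)‖ ≤ ((4L_ρM_c³ + 2L_τσ_Q + 2L_cM_Q²M_c²)/σ_Q²)‖c(y)‖²`. -/
theorem stmt6 {n p : ℕ}
    (X : Set (EuclideanSpace ℝ (Fin n))) (hXne : X.Nonempty) (hXcl : IsClosed X)
    (U : Set (EuclideanSpace ℝ (Fin n))) (hU : Convex ℝ U)
    (c : EuclideanSpace ℝ (Fin n) → EuclideanSpace ℝ (Fin p))
    (J : EuclideanSpace ℝ (Fin n) → (EuclideanSpace ℝ (Fin n) →L[ℝ] EuclideanSpace ℝ (Fin p)))
    (hderiv : ∀ u ∈ U, HasFDerivAt c (J u) u)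
    (L_c L_ρ M_Q M_c L_τ σ_Q τ : ℝ) (hσQ : 0 < σ_Q) (hτ0 : 0 ≤ τ)
    (hJLip : ∀ u ∈ U, ∀ v ∈ U, ‖J u - J v‖ ≤ L_c * ‖u - v‖)
    (hJb : ∀ u ∈ U, ‖J u‖ ≤ M_c)
    (y : EuclideanSpace ℝ (Fin n)) (hyX : y ∈ X) (hyU : y ∈ U)
    (Q : EuclideanSpace ℝ (Fin n) →L[ℝ] EuclideanSpace ℝ (Fin n))
    (hQsa : IsSelfAdjoint Q)
    (hQpsd : ∀ u : EuclideanSpace ℝ (Fin n), 0 ≤ ⟪u, Q u⟫)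
    (hQn : ‖Q‖ ≤ M_Q)
    (hτ : τ ≤ L_τ * ‖c y‖)
    (hcoer : ∀ v : EuclideanSpace ℝ (Fin p),
      σ_Q / 2 * ‖v‖ ^ 2 ≤ ⟪v, (J y) (Q ((ContinuousLinearMap.adjoint (J y)) v))⟫)
    (hsmall : 2 * M_c / σ_Q * ‖c y‖ ≤ 1)
    (hgrowth : ∀ v : EuclideanSpace ℝ (Fin n), ‖v‖ ≤ 1 →
      infDist (y + Q v) X ≤ L_ρ * ‖v‖ ^ 2)
    (d A : EuclideanSpace ℝ (Fin n))
    (hd : d = (ContinuousLinearMap.adjoint (J y))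
      (Ring.inverse ((J y).comp (Q.comp (ContinuousLinearMap.adjoint (J y))) +
        τ • (1 : EuclideanSpace ℝ (Fin p) →L[ℝ] EuclideanSpace ℝ (Fin p))) (c y)))
    (hA : A = y - Q d) (hAU : A ∈ U) :
    ∀ w ∈ X, ‖A - w‖ = infDist A X → w ∈ U →
      ‖c w‖ ≤ (4 * L_ρ * M_c ^ 3 + 2 * L_τ * σ_Q + 2 * L_c * M_Q ^ 2 * M_c ^ 2) / σ_Q ^ 2
        * ‖c y‖ ^ 2 := by
  intro w hwX hwdist hwU
  have hHco : ∀ v, σ_Q / 2 * ‖v‖ ^ 2 ≤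
      ⟪v, ((J y).comp (Q.comp (ContinuousLinearMap.adjoint (J y))) +
        τ • (1 : EuclideanSpace ℝ (Fin p) →L[ℝ] EuclideanSpace ℝ (Fin p))) v⟫ := by
    intro v
    have h1 := hcoer v
    have h2 : 0 ≤ τ * ‖v‖ ^ 2 := by positivity
    simp only [add_apply, ContinuousLinearMap.comp_apply, smul_apply,
      one_apply_eq_self, inner_add_right, real_inner_smul_right,
      real_inner_self_eq_norm_sq]
    linarith
  have hunit := isUnit_of_coercive (half_pos hσQ) _ hHco
  set H := (J y).comp (Q.comp (ContinuousLinearMap.adjoint (J y))) +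
        τ • (1 : EuclideanSpace ℝ (Fin p) →L[ℝ] EuclideanSpace ℝ (Fin p)) with hHdef
  set z := Ring.inverse H (c y) with hz
  have hHz : H z = c y := by
    have := congrArg (fun T => T (c y)) (Ring.mul_inverse_cancel H hunit)
    simpa using this
  have hHz' : J y (Q d) + τ • z = c y := by
    rw [← hHz, hd]
    simp [hHdef]
  by_cases hc0 : c y = 0
  · have hd0 : d = 0 := by rw [hd, hz, hc0]; simp
    have hAy : A = y := by rw [hA, hd0]; simp
    have hwy : w = y := by
      rw [hAy, infDist_zero_of_mem hyX, norm_eq_zero, sub_eq_zero] at hwdist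
      exact hwdist.symm
    rw [hwy, hc0]; simp
  have hcpos : 0 < ‖c y‖ := norm_pos_iff.2 hc0
  have hzne : z ≠ 0 := by
    intro h
    rw [h, map_zero] at hHz
    exact hc0 hHz.symm
  have hzpos : 0 < ‖z‖ := norm_pos_iff.2 hzne
  have hQd : Q d ≠ 0 := by
    intro h
    have h1 := hcoer z
    rw [← hd, h, map_zero, inner_zero_right] at h1
    have : 0 < σ_Q / 2 * ‖z‖ ^ 2 := by positivity
    linarith
  have hdne : d ≠ 0 := by
    rintro h
    exact hQd (by rw [h, map_zero])
  have hdpos : 0 < ‖d‖ := norm_pos_iff.2 hdne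
  have hMc : 0 ≤ M_c := (norm_nonneg _).trans (hJb y hyU)
  have hzle : ‖z‖ ≤ 2 / σ_Q * ‖c y‖ := by
    have h1 := (hHco z).trans (real_inner_le_norm _ _)
    rw [hHz] at h1
    have h2 : σ_Q / 2 * ‖z‖ ≤ ‖c y‖ := by
      refine le_of_mul_le_mul_left ?_ hzpos
      linarith [h1]
    rw [div_mul_eq_mul_div, le_div_iff₀ hσQ]
    linarith
  have hdle : ‖d‖ ≤ 2 * M_c / σ_Q * ‖c y‖ := by
    have h1 : ‖d‖ ≤ M_c * ‖z‖ := by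
      rw [hd]
      refine (ContinuousLinearMap.le_opNorm _ _).trans ?_
      rw [LinearIsometryEquiv.norm_map]
      gcongr
      exact hJb y hyU
    calc ‖d‖ ≤ M_c * ‖z‖ := h1
      _ ≤ M_c * (2 / σ_Q * ‖c y‖) := by gcongr
      _ = 2 * M_c / σ_Q * ‖c y‖ := by ring
  have hdist : infDist A X ≤ L_ρ * ‖d‖ ^ 2 := by
    have h1 := hgrowth (-d) (by rw [norm_neg]; exact hdle.trans hsmall)
    rwa [map_neg, norm_neg, ← sub_eq_add_neg, ← hA] at h1
  have hLρ : 0 ≤ L_ρ :=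
    nonneg_of_mul_nonneg_left (infDist_nonneg.trans hdist) (by positivity)
  have hAy : A - y = -Q d := by rw [hA]; abel
  have hLc : 0 ≤ L_c := by
    have h1 := (norm_nonneg _).trans (hJLip A hAU y hyU)
    rw [hAy, norm_neg] at h1
    exact nonneg_of_mul_nonneg_left h1 (norm_pos_iff.2 hQd)
  have hA' : A = y + -Q d := by rw [hA]; abel
  have hcA : ‖c A‖ ≤ τ * ‖z‖ + L_c / 2 * (M_Q * ‖d‖) ^ 2 := by
    have h1 := norm_sub_linearization_le hU hderiv hJLip hyU (hA' ▸ hAU)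
    rw [← hA', norm_neg, map_neg] at h1
    have h2 : c A = τ • z + (c A - c y - -(J y (Q d))) := by
      rw [← hHz']; abel
    have h3 : ‖Q d‖ ≤ M_Q * ‖d‖ := (Q.le_opNorm d).trans (by gcongr)
    calc ‖c A‖ ≤ ‖τ • z‖ + ‖c A - c y - -(J y (Q d))‖ := by
          conv_lhs => rw [h2]
          exact norm_add_le _ _
      _ ≤ τ * ‖z‖ + L_c / 2 * ‖Q d‖ ^ 2 := by
          rw [norm_smul, Real.norm_of_nonneg hτ0]
          gcongr
      _ ≤ τ * ‖z‖ + L_c / 2 * (M_Q * ‖d‖) ^ 2 := by gcongr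
  have hcw : ‖c w - c A‖ ≤ M_c * (L_ρ * ‖d‖ ^ 2) := by
    have h1 := hU.norm_image_sub_le_of_norm_hasFDerivWithin_le
      (fun u hu => (hderiv u hu).hasFDerivWithinAt) hJb hAU hwU
    rw [norm_sub_rev w A, hwdist] at h1
    exact h1.trans (by gcongr)
  have hMQ : 0 ≤ M_Q := (norm_nonneg _).trans hQn
  calc ‖c w‖ = ‖(c w - c A) + c A‖ := by rw [sub_add_cancel]
    _ ≤ ‖c w - c A‖ + ‖c A‖ := norm_add_le _ _
    _ ≤ M_c * (L_ρ * ‖d‖ ^ 2) + (τ * ‖z‖ + L_c / 2 * (M_Q * ‖d‖) ^ 2) := add_le_add hcw hcA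
    _ ≤ M_c * (L_ρ * (2 * M_c / σ_Q * ‖c y‖) ^ 2) + ((L_τ * ‖c y‖) * (2 / σ_Q * ‖c y‖)
          + L_c / 2 * (M_Q * (2 * M_c / σ_Q * ‖c y‖)) ^ 2) := by
        have h0 : 0 ≤ L_τ * ‖c y‖ := hτ0.trans hτ
        gcongr
    _ = _ := by
        field_simp
        ring
end

section
/- Let X ⊆ ℝⁿ be closed, U ⊆ X open in ℝⁿ, and φ : U → ℝ three times continuously differentiable with ∇²φ(y) positive definite for every y ∈ U. Suppose g := ∇φ maps U bijectively onto an open set V ⊆ ℝⁿ with twice continuously differentiable inverse ψ : V → U. Define T_φ(y; w) := ½ (∇²φ(y))⁻¹ (∇³φ(y)[(∇²φ(y))⁻¹ w]) (∇²φ(y))⁻¹. Let x ∈ U and d ∈ ℝⁿ be such that the segment [g(x), g(x)+d] is contained in V, and let L ≥ 0 satisfy ‖T_φ(ψ(u); w)‖ ≤ L for every u on this segment and every w with ‖w‖ = 1. Then dist(x + (∇²φ(x))⁻¹ d, X) ≤ L‖d‖². -/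
open scoped RealInnerProductSpace

/-!
The curve `γ t = ψ (g x + t d)` stays in `U ⊆ X`, starts at `x`, and by the inverse function rule
has velocity `(H (γ t))⁻¹ d`; in particular `x + (H x)⁻¹ d` is its first-order Taylor value at
`t = 1`. Differentiating the inverse gives `γ'' t = -2 T (γ t; d) d`, so `‖γ''‖ ≤ 2 L ‖d‖²`, and
the Taylor remainder estimate `taylor_two_bound` yields
`‖x + (H x)⁻¹ d - γ 1‖ ≤ L ‖d‖²` with `γ 1 ∈ X`.
-/

open Set Topology

/-- Second-order Taylor estimate for curves in a normed space, with a bound `2 * C` on the second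
derivative. -/
lemma taylor_two_bound {E : Type*} [NormedAddCommGroup E] [NormedSpace ℝ E]
    {γ γ' γ'' : ℝ → E} {C : ℝ}
    (h1 : ∀ t ∈ Icc (0 : ℝ) 1, HasDerivAt γ (γ' t) t)
    (h2 : ∀ t ∈ Icc (0 : ℝ) 1, HasDerivAt γ' (γ'' t) t)
    (hC : ∀ t ∈ Icc (0 : ℝ) 1, ‖γ'' t‖ ≤ 2 * C) :
    ‖γ 1 - γ 0 - γ' 0‖ ≤ C := by
  have hv : ∀ t ∈ Icc (0 : ℝ) 1, ‖γ' t - γ' 0‖ ≤ 2 * C * (t - 0) :=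
    norm_image_sub_le_of_norm_deriv_le_segment' (fun t ht => (h2 t ht).hasDerivWithinAt)
      (fun t ht => hC t (Ico_subset_Icc_self ht))
  have hf : ∀ t ∈ Icc (0 : ℝ) 1,
      HasDerivAt (fun t => γ t - γ 0 - t • γ' 0) (γ' t - γ' 0) t := by
    intro t ht
    have hid : HasDerivAt (fun s : ℝ => s • γ' 0) (γ' 0) t := by
      simpa using (hasDerivAt_id t).smul_const (γ' 0)
    exact ((h1 t ht).sub_const (γ 0)).fun_sub hid
  have hB : ∀ t : ℝ, HasDerivAt (fun t => C * t ^ 2) (2 * C * t) t := by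
    intro t
    have := (hasDerivAt_pow 2 t).const_mul C
    refine this.congr_deriv ?_
    simp only [Nat.cast_ofNat, Nat.add_one_sub_one, pow_one]
    ring
  have := image_norm_le_of_norm_deriv_right_le_deriv_boundary
    (f := fun t => γ t - γ 0 - t • γ' 0) (f' := fun t => γ' t - γ' 0) (a := 0) (b := 1)
    (B := fun t => C * t ^ 2) (B' := fun t => 2 * C * t)
    (fun t ht => (hf t ht).continuousAt.continuousWithinAt)
    (fun t ht => (hf t (Ico_subset_Icc_self ht)).hasDerivWithinAt)
    (by simp) hB
    (fun t ht => by simpa using hv t (Ico_subset_Icc_self ht))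
    (right_mem_Icc.2 zero_le_one)
  simpa using this

/-- A positive definite operator on a finite-dimensional space is invertible. -/
lemma isUnit_of_inner_pos {E : Type*} [NormedAddCommGroup E] [InnerProductSpace ℝ E]
    [FiniteDimensional ℝ E] {A : E →L[ℝ] E} (hA : ∀ v : E, v ≠ 0 → 0 < ⟪v, A v⟫) :
    IsUnit A := by
  have : CompleteSpace E := FiniteDimensional.complete ℝ E
  have hinj : Function.Injective A := by
    rw [injective_iff_map_eq_zero]
    intro v hv
    by_contra hne
    have := hA v hne
    simp [hv] at this
  rw [ContinuousLinearMap.isUnit_iff_bijective]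
  exact ⟨hinj, (LinearMap.injective_iff_surjective (f := (A : E →ₗ[ℝ] E))).1 hinj⟩

/-- The derivative of `A⁻¹ d` along a curve `A` of operators is `-A⁻¹ A' A⁻¹ d`. -/
lemma hasDerivAt_inverse_apply {E : Type*} [NormedAddCommGroup E] [NormedSpace ℝ E]
    [CompleteSpace E] {A : ℝ → E →L[ℝ] E} {A' : E →L[ℝ] E} {t : ℝ} (d : E)
    (hA : HasDerivAt A A' t) (hu : IsUnit (A t)) :
    HasDerivAt (fun s => Ring.inverse (A s) d)
      (-(Ring.inverse (A t) (A' (Ring.inverse (A t) d)))) t := by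
  obtain ⟨B, hB⟩ := hu
  have hinv := hasFDerivAt_ringInverse (𝕜 := ℝ) B
  rw [hB] at hinv
  have hcomp := hinv.comp_hasDerivAt t hA
  have happ := (ContinuousLinearMap.apply ℝ E d).hasFDerivAt.comp_hasDerivAt t hcomp
  refine happ.congr_deriv ?_
  rw [← hB, Ring.inverse_unit]
  simp

/-- (Key step of the paper's Proposition 4.2.) For a projective
Bregman kernel `φ` of the closed set `X` (with `U ⊆ X` open, `g = ∇φ`, `H = ∇²φ`,
`ψ = g⁻¹` taking values in `U ⊆ X`), the inverse Hessian satisfies the quadratic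
distance-growth property `dist(x + (H x)⁻¹ d, X) ≤ L ‖d‖²`. -/
theorem stmt17 {n : ℕ}
    (X : Set (EuclideanSpace ℝ (Fin n))) (hXcl : IsClosed X)
    (U V : Set (EuclideanSpace ℝ (Fin n))) (hUX : U ⊆ X)
    (hU : IsOpen U) (hV : IsOpen V)
    (φ : EuclideanSpace ℝ (Fin n) → ℝ)
    (g ψ : EuclideanSpace ℝ (Fin n) → EuclideanSpace ℝ (Fin n))
    (H : EuclideanSpace ℝ (Fin n) → (EuclideanSpace ℝ (Fin n) →L[ℝ] EuclideanSpace ℝ (Fin n)))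
    (D3 : EuclideanSpace ℝ (Fin n) →
      (EuclideanSpace ℝ (Fin n) →L[ℝ] (EuclideanSpace ℝ (Fin n) →L[ℝ] EuclideanSpace ℝ (Fin n))))
    (hg : ∀ y ∈ U, HasGradientAt φ (g y) y)
    (hH : ∀ y ∈ U, HasFDerivAt g (H y) y)
    (hD3 : ∀ y ∈ U, HasFDerivAt H (D3 y) y)
    (hD3c : ContinuousOn D3 U)
    (hHsa : ∀ y ∈ U, IsSelfAdjoint (H y))
    (hHpd : ∀ y ∈ U, ∀ v : EuclideanSpace ℝ (Fin n), v ≠ 0 → 0 < ⟪v, H y v⟫)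
    (hgV : Set.MapsTo g U V) (hψU : Set.MapsTo ψ V U)
    (hinv₁ : ∀ y ∈ U, ψ (g y) = y) (hinv₂ : ∀ v ∈ V, g (ψ v) = v)
    (hψ : ContDiffOn ℝ 2 ψ V)
    (T : EuclideanSpace ℝ (Fin n) → EuclideanSpace ℝ (Fin n) →
      (EuclideanSpace ℝ (Fin n) →L[ℝ] EuclideanSpace ℝ (Fin n)))
    (hT : ∀ y w, T y w = (2 : ℝ)⁻¹ •
      ((Ring.inverse (H y)).comp (((D3 y) ((Ring.inverse (H y)) w)).comp (Ring.inverse (H y)))))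
    (x : EuclideanSpace ℝ (Fin n)) (hx : x ∈ U) (d : EuclideanSpace ℝ (Fin n))
    (hseg : segment ℝ (g x) (g x + d) ⊆ V)
    (L : ℝ) (hL : 0 ≤ L)
    (hTL : ∀ u ∈ segment ℝ (g x) (g x + d), ∀ w : EuclideanSpace ℝ (Fin n), ‖w‖ = 1 →
      ‖T (ψ u) w‖ ≤ L) :
    Metric.infDist (x + (Ring.inverse (H x)) d) X ≤ L * ‖d‖ ^ 2 := by
  have hunit : ∀ y ∈ U, IsUnit (H y) := fun y hy => isUnit_of_inner_pos (hHpd y hy)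
  have hψ' : ∀ u ∈ V, HasFDerivAt ψ (Ring.inverse (H (ψ u))) u := by
    intro u hu
    obtain ⟨A, hA⟩ := hunit _ (hψU hu)
    have hH' := hH _ (hψU hu)
    rw [← hA] at hH' ⊢
    rw [Ring.inverse_unit]
    exact HasFDerivAt.of_local_left_inverse (f' := ContinuousLinearEquiv.unitsEquiv ℝ _ A)
      (hψ.continuousOn.continuousAt (hV.mem_nhds hu)) hH'
      (Filter.eventually_of_mem (hV.mem_nhds hu) hinv₂)
  have hp : ∀ t ∈ Icc (0 : ℝ) 1, g x + t • d ∈ segment ℝ (g x) (g x + d) := by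
    intro t ht
    rw [segment_eq_image']
    exact ⟨t, ht, by simp⟩
  have hline : ∀ t : ℝ, HasDerivAt (fun t : ℝ => g x + t • d) d t := by
    intro t
    simpa using ((hasDerivAt_id t).smul_const d).const_add (g x)
  have h1 : ∀ t ∈ Icc (0 : ℝ) 1, HasDerivAt (fun t : ℝ => ψ (g x + t • d))
      (Ring.inverse (H (ψ (g x + t • d))) d) t := fun t ht =>
    (hψ' _ (hseg (hp t ht))).comp_hasDerivAt t (hline t)
  have h2 : ∀ t ∈ Icc (0 : ℝ) 1,
      HasDerivAt (fun t : ℝ => Ring.inverse (H (ψ (g x + t • d))) d)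
        (-((2 : ℝ) • T (ψ (g x + t • d)) d d)) t := by
    intro t ht
    have hy := hψU (hseg (hp t ht))
    have hHt := (hD3 _ hy).comp_hasDerivAt t (h1 t ht)
    refine (hasDerivAt_inverse_apply d hHt (hunit _ hy)).congr_deriv ?_
    rw [hT, smul_apply, smul_inv_smul₀ two_ne_zero]
    rfl
  -- `T y` is linear in its direction, so the bound on unit vectors scales to `d`.
  have hTd : ∀ u ∈ segment ℝ (g x) (g x + d), ‖T (ψ u) d‖ ≤ L * ‖d‖ := by
    intro u hu
    rcases eq_or_ne d 0 with hd | hd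
    · have h0 : T (ψ u) 0 = 0 := by
        rw [hT, map_zero, map_zero, ContinuousLinearMap.zero_comp, ContinuousLinearMap.comp_zero]
        ext1 v
        rw [smul_apply, zero_apply, smul_zero]
      rw [hd, h0, norm_zero, norm_zero, mul_zero]
    · have hn : ‖d‖ ≠ 0 := norm_ne_zero_iff.2 hd
      have hsc : T (ψ u) d = ‖d‖ • T (ψ u) (‖d‖⁻¹ • d) := by
        rw [hT, hT]
        simp only [map_smul, ContinuousLinearMap.smul_comp, ContinuousLinearMap.comp_smul]
        rw [smul_comm ‖d‖, smul_smul ‖d‖, mul_inv_cancel₀ hn, one_smul]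
      rw [hsc, norm_smul, norm_norm, mul_comm]
      gcongr
      exact hTL u hu _ (by rw [norm_smul, norm_inv, norm_norm, inv_mul_cancel₀ hn])
  have hC : ∀ t ∈ Icc (0 : ℝ) 1,
      ‖-((2 : ℝ) • T (ψ (g x + t • d)) d d)‖ ≤ 2 * (L * ‖d‖ ^ 2) := by
    intro t ht
    rw [norm_neg, norm_smul, Real.norm_ofNat]
    gcongr
    calc ‖T (ψ (g x + t • d)) d d‖ ≤ ‖T (ψ (g x + t • d)) d‖ * ‖d‖ :=
          ContinuousLinearMap.le_opNorm _ _
      _ ≤ L * ‖d‖ * ‖d‖ := by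
          gcongr
          exact hTd _ (hp t ht)
      _ = L * ‖d‖ ^ 2 := by ring
  have key := taylor_two_bound h1 h2 hC
  simp only [one_smul, zero_smul, add_zero, hinv₁ x hx] at key
  have hmem : ψ (g x + d) ∈ X := hUX (hψU (hseg (right_mem_segment ℝ _ _)))
  refine (Metric.infDist_le_dist_of_mem hmem).trans ?_
  rwa [dist_comm, dist_eq_norm, ← sub_sub]
end
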